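/- Let 𝔥 and ℋ be separable complex Hilbert spaces, 𝔖 and 𝔰 bounded self-adjoint operators on ℋ, g ∈ 𝔥, and (V_τ)_{τ∈ℝ} a strongly continuous one-parameter group of unitary operators on 𝔥. For z ∈ 𝔥 set α_τ(z) = 2 Re⟨z, V_τ g⟩ and 𝔰(τ) = e^{iτ𝔖} 𝔰 e^{−iτ𝔖}, and let Ũ_{t,s}(z) be the propagator generated by τ ↦ α_τ(z)𝔰(τ). Let (μ, γ) be a state-valued measure on 𝔥 with ∫_𝔥 ‖z‖ dμ(z) < ∞, and define γ_t(z) := Ũ_{t,0}(z) γ(z) Ũ_{t,0}(z)* for t ∈ ℝ. Then for every t, s ∈ ℝ and every η ∈ 𝔥, the maps z ↦ e^{2i Re⟨η,z⟩} γ_t(z) and (τ, z) ↦ [γ_τ(z), 𝔰(τ)] α_τ(z) e^{2i Re⟨η,z⟩} are Bochner integrable (in trace norm) against μ and against dμ(z)dτ on [s,t] × 𝔥 respectively, and the transport equation holds: ∫_𝔥 e^{2i Re⟨η,z⟩} γ_t(z) dμ(z) − ∫_𝔥 e^{2i Re⟨η,z⟩} γ_s(z) dμ(z) = i ∫_s^t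 ( ∫_𝔥 [γ_τ(z), 𝔰(τ)] α_τ(z) e^{2i Re⟨η,z⟩} dμ(z) ) dτ. -/

import Mathlib

noncomputable section
open MeasureTheory Complex
open scoped InnerProductSpace

variable {ℋ : Type*} [NormedAddCommGroup ℋ] [InnerProductSpace ℂ ℋ] [CompleteSpace ℋ]

/-- The trace norm `‖T‖₁ = tr √(T*T)` computed in the Hilbert basis `e`. -/
def traceNorm {ι : Type*} (e : HilbertBasis ι ℂ ℋ) (T : ℋ →L[ℂ] ℋ) : ℝ :=
  ∑' i, (⟪e i, (CFC.sqrt (star T * T)) (e i)⟫_ℂ).re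

/-- `T` is trace class: `tr √(T*T) < ∞`. -/
def IsTraceClass {ι : Type*} (e : HilbertBasis ι ℂ ℋ) (T : ℋ →L[ℂ] ℋ) : Prop :=
  Summable fun i => (⟪e i, (CFC.sqrt (star T * T)) (e i)⟫_ℂ).re

/-- A state-valued measure: a finite Borel measure `μ` on `𝔥` together with a trace-norm
Bochner integrable map `γ` whose values are `μ`-a.e. positive trace-one operators on `ℋ`. -/
def IsStateValuedMeasure {𝔥 : Type*} [NormedAddCommGroup 𝔥] [InnerProductSpace ℂ 𝔥]
    [MeasurableSpace 𝔥] {ι : Type*} (e : HilbertBasis ι ℂ ℋ)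
    (μ : Measure 𝔥) (γ : 𝔥 → (ℋ →L[ℂ] ℋ)) : Prop :=
  IsFiniteMeasure μ ∧ Integrable γ μ ∧ Integrable (fun z => traceNorm e (γ z)) μ ∧
  (∀ᵐ z ∂μ, (γ z).IsPositive) ∧
  (∀ᵐ z ∂μ, HasSum (fun i => (⟪e i, γ z (e i)⟫_ℂ).re) 1)

/-- The Fourier transform `𝔪̂(η) = ∫ e^{2i Re⟨η,z⟩} γ(z) dμ(z)` of a state-valued measure. -/
def svmFourier {𝔥 : Type*} [NormedAddCommGroup 𝔥] [InnerProductSpace ℂ 𝔥]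
    [MeasurableSpace 𝔥] (μ : Measure 𝔥) (γ : 𝔥 → (ℋ →L[ℂ] ℋ)) (η : 𝔥) : ℋ →L[ℂ] ℋ :=
  ∫ z, Complex.exp (2 * Complex.I * ((⟪η, z⟫_ℂ).re : ℂ)) • γ z ∂μ

/-- `U` is a norm-continuous (in the first time variable) solution of the Duhamel integral
equation `U t s = 1 - i ∫_s^t H τ * U τ s dτ` (Bochner integral in `B(ℋ)`). -/
def IsPropagator (H : ℝ → (ℋ →L[ℂ] ℋ)) (U : ℝ → ℝ → (ℋ →L[ℂ] ℋ)) : Prop :=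
  (∀ s : ℝ, Continuous fun t => U t s) ∧
  ∀ s t : ℝ, U t s = 1 - Complex.I • ∫ τ in s..t, (H τ) * (U τ s)

/-- The interaction-picture spin operator `𝔰(τ) = e^{iτ𝔖} 𝔰 e^{-iτ𝔖}`. -/
def sTau (𝔖 𝔰 : ℋ →L[ℂ] ℋ) (τ : ℝ) : ℋ →L[ℂ] ℋ :=
  NormedSpace.exp ((Complex.I * τ) • 𝔖) * 𝔰 * NormedSpace.exp ((-(Complex.I * τ)) • 𝔖)

/-- The evolved density `γ_t(z) = Ũ_{t,0}(z) γ(z) Ũ_{t,0}(z)*`. -/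
def gammaT {𝔥 : Type*} (U : 𝔥 → ℝ → ℝ → (ℋ →L[ℂ] ℋ)) (γ : 𝔥 → (ℋ →L[ℂ] ℋ))
    (t : ℝ) (z : 𝔥) : ℋ →L[ℂ] ℋ :=
  U z t 0 * γ z * star (U z t 0)

set_option linter.unusedSectionVars false

lemma aux_countable [SecondCountableTopology ℋ] {ι : Type*} (e : HilbertBasis ι ℂ ℋ) :
    Countable ι := by
  refine Pairwise.countable_of_isOpen_disjoint (s := fun i => Metric.ball (e i) (1/2)) ?_
    (fun i => Metric.isOpen_ball) (fun i => ⟨e i, by simp⟩)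
  intro i j hij
  apply Metric.ball_disjoint_ball
  have h1 : ‖e i - e j‖ ^ 2 = 2 := by
    have := e.orthonormal
    rw [@norm_sub_sq ℂ, this.1 i, this.1 j, this.2 hij]
    norm_num
  rw [dist_eq_norm]
  nlinarith [norm_nonneg (e i - e j)]

lemma aux_continuous_sqrt : Continuous fun T : ℋ →L[ℂ] ℋ => CFC.sqrt (star T * T) := by
  simp_rw [CFC.sqrt_eq_cfc]
  refine Continuous.cfc_nnreal_of_mem_nhdsSet (s := Set.univ) _ Filter.univ_mem (by fun_prop)
    (fun x => star_mul_self_nonneg x) (by fun_prop)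

lemma aux_sqrt_re_nonneg (T : ℋ →L[ℂ] ℋ) (x : ℋ) :
    0 ≤ (⟪x, (CFC.sqrt T) x⟫_ℂ).re := by
  have h := (ContinuousLinearMap.nonneg_iff_isPositive _).1 (CFC.sqrt_nonneg T)
  exact h.re_inner_nonneg_right x

lemma aux_traceNorm_eq {ι : Type*} (e : HilbertBasis ι ℂ ℋ) (T : ℋ →L[ℂ] ℋ) :
    traceNorm e T =
      (∑' i, ENNReal.ofReal (⟪e i, (CFC.sqrt (star T * T)) (e i)⟫_ℂ).re).toReal := by
  rw [ENNReal.tsum_toReal_eq (fun _ => ENNReal.ofReal_ne_top), traceNorm]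
  refine tsum_congr fun i => ?_
  rw [ENNReal.toReal_ofReal (aux_sqrt_re_nonneg _ _)]

lemma aux_traceNorm_meas [SecondCountableTopology ℋ] {ι : Type*} (e : HilbertBasis ι ℂ ℋ)
    {α : Type*} [MeasurableSpace α] {μ : Measure α} {F : α → (ℋ →L[ℂ] ℋ)}
    (hF : AEStronglyMeasurable F μ) :
    AEStronglyMeasurable (fun a => traceNorm e (F a)) μ := by
  have := aux_countable e
  simp_rw [aux_traceNorm_eq]
  refine AEMeasurable.aestronglyMeasurable ?_
  refine AEMeasurable.ennreal_toReal ?_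
  refine AEMeasurable.ennreal_tsum fun i => ?_
  refine AEMeasurable.ennreal_ofReal ?_
  have hc : Continuous fun T : ℋ →L[ℂ] ℋ =>
      (⟪e i, (CFC.sqrt (star T * T)) (e i)⟫_ℂ).re := by
    have := (aux_continuous_sqrt (ℋ := ℋ))
    fun_prop
  exact (hc.comp_aestronglyMeasurable hF).aemeasurable

lemma aux_parseval {ι : Type*} (e : HilbertBasis ι ℂ ℋ) (x : ℋ) :
    ∑' j, ENNReal.ofReal (‖⟪e j, x⟫_ℂ‖ ^ 2) = ENNReal.ofReal (‖x‖ ^ 2) := by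
  have h := e.hasSum_inner_mul_inner x x
  have h2 : HasSum (fun j => ‖⟪e j, x⟫_ℂ‖ ^ 2) (‖x‖ ^ 2) := by
    have h3 := Complex.hasSum_re h
    convert h3 using 1
    · ext j
      rw [← inner_conj_symm x (e j), ← Complex.normSq_eq_conj_mul_self, Complex.ofReal_re,
        Complex.normSq_eq_norm_sq]
    · rw [inner_self_eq_norm_sq_to_K]
      norm_cast
  rw [← h2.tsum_eq, ENNReal.ofReal_tsum_of_nonneg (fun _ => by positivity) h2.summable]

lemma aux_HS {ι : Type*} (e : HilbertBasis ι ℂ ℋ) (A : ℋ →L[ℂ] ℋ) :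
    ∑' i, ENNReal.ofReal (‖A (e i)‖ ^ 2) = ∑' i, ENNReal.ofReal (‖(star A) (e i)‖ ^ 2) := by
  simp_rw [← aux_parseval e]
  rw [ENNReal.tsum_comm]
  refine tsum_congr fun i => tsum_congr fun j => ?_
  rw [ContinuousLinearMap.star_eq_adjoint, ContinuousLinearMap.adjoint_inner_right,
    ← inner_conj_symm, RCLike.norm_conj]

lemma aux_trace_bound {ι : Type*} (e : HilbertBasis ι ℂ ℋ) (γ A B : ℋ →L[ℂ] ℋ)
    (hγ : γ.IsPositive) (h1 : HasSum (fun i => (⟪e i, γ (e i)⟫_ℂ).re) 1) (F : Finset ι) :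
    ‖∑ i ∈ F, ⟪e i, (A * γ * B) (e i)⟫_ℂ‖ ≤ ‖A‖ * ‖B‖ := by
  have h0 : 0 ≤ γ := (ContinuousLinearMap.nonneg_iff_isPositive _).2 hγ
  obtain ⟨R, hRs, hRR⟩ : ∃ R : ℋ →L[ℂ] ℋ, star R = R ∧ R * R = γ :=
    ⟨CFC.sqrt γ, (CFC.sqrt_nonneg γ).isSelfAdjoint, CFC.sqrt_mul_sqrt_self γ h0⟩
  have hmove : ∀ x y, ⟪x, R y⟫_ℂ = ⟪R x, y⟫_ℂ := fun x y => by
    conv_lhs => rw [← hRs]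
    rw [ContinuousLinearMap.star_eq_adjoint, ContinuousLinearMap.adjoint_inner_right]
  have hR1 : ∑' i, ENNReal.ofReal (‖R (e i)‖ ^ 2) = 1 := by
    have : (fun i => (⟪e i, γ (e i)⟫_ℂ).re) = fun i => ‖R (e i)‖ ^ 2 := by
      ext i
      rw [← hRR, mul_apply_eq_comp, hmove, inner_self_eq_norm_sq_to_K]
      norm_cast
    rw [this] at h1
    rw [← ENNReal.ofReal_tsum_of_nonneg (fun _ => by positivity) h1.summable, h1.tsum_eq]
    simp
  have key : ∀ C : ℋ →L[ℂ] ℋ, ∑ i ∈ F, ‖R (C (e i))‖ ^ 2 ≤ ‖C‖ ^ 2 := by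
    intro C
    rw [← ENNReal.ofReal_le_ofReal_iff (by positivity),
      ENNReal.ofReal_sum_of_nonneg (fun _ _ => by positivity)]
    calc _ ≤ ∑' i, ENNReal.ofReal (‖(R * C) (e i)‖ ^ 2) := ENNReal.sum_le_tsum F
      _ = ∑' i, ENNReal.ofReal (‖(star C) (R (e i))‖ ^ 2) := by
        rw [aux_HS, star_mul, hRs]; rfl
      _ ≤ ∑' i, ENNReal.ofReal (‖C‖ ^ 2) * ENNReal.ofReal (‖R (e i)‖ ^ 2) := by
        refine ENNReal.tsum_le_tsum fun i => ?_
        rw [← ENNReal.ofReal_mul (by positivity), ← mul_pow]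
        apply ENNReal.ofReal_le_ofReal
        gcongr
        rw [← norm_star C]
        exact ContinuousLinearMap.le_opNorm _ _
      _ = _ := by rw [ENNReal.tsum_mul_left, hR1, mul_one]
  calc _ ≤ ∑ i ∈ F, ‖R ((star A) (e i))‖ * ‖R (B (e i))‖ := by
        refine (norm_sum_le _ _).trans (Finset.sum_le_sum fun i _ => ?_)
        have : ⟪e i, (A * γ * B) (e i)⟫_ℂ = ⟪R ((star A) (e i)), R (B (e i))⟫_ℂ := by
          rw [← hmove, ContinuousLinearMap.star_eq_adjoint,
            ContinuousLinearMap.adjoint_inner_left, ← hRR]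
          rfl
        rw [this]
        exact norm_inner_le_norm _ _
    _ ≤ √(∑ i ∈ F, ‖R ((star A) (e i))‖ ^ 2) * √(∑ i ∈ F, ‖R (B (e i))‖ ^ 2) :=
        Real.sum_mul_le_sqrt_mul_sqrt _ _ _
    _ ≤ √(‖star A‖ ^ 2) * √(‖B‖ ^ 2) := by
        gcongr
        · exact key _
        · exact key _
    _ = _ := by rw [Real.sqrt_sq (norm_nonneg _), Real.sqrt_sq (norm_nonneg _), norm_star]

lemma aux_traceNorm_le {ι : Type*} (e : HilbertBasis ι ℂ ℋ) (T : ℋ →L[ℂ] ℋ) (C : ℝ)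
    (h : ∀ X : ℋ →L[ℂ] ℋ, ‖X‖ ≤ 1 → ∀ F : Finset ι, ‖∑ i ∈ F, ⟪e i, (X * T) (e i)⟫_ℂ‖ ≤ C) :
    traceNorm e T ≤ C := by
  refine Real.tsum_le_of_sum_le (fun i => aux_sqrt_re_nonneg _ _) fun F => ?_
  set P := CFC.sqrt (star T * T) with hP
  have hP0 : 0 ≤ P := CFC.sqrt_nonneg _
  have hPs : IsSelfAdjoint P := hP0.isSelfAdjoint
  have hPP : P * P = star T * T := CFC.sqrt_mul_sqrt_self _ (star_mul_self_nonneg T)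
  have main : ∀ ε : ℝ, 0 < ε → ∑ i ∈ F, (⟪e i, P (e i)⟫_ℂ).re ≤ C + F.card * ε := by
    intro ε hε
    have hpos : ∀ x : ℝ, 0 < |x| + ε := fun x => by positivity
    have hcg : Continuous (fun x : ℝ => (|x| + ε)⁻¹) :=
      Continuous.inv₀ (by fun_prop) (fun x => (hpos x).ne')
    have hid : Continuous (fun x : ℝ => x) := continuous_id
    have hc1 : Continuous (fun x : ℝ => (|x| + ε)⁻¹ * x) := hcg.mul hid
    have hc2 : Continuous (fun x : ℝ => (|x| + ε)⁻¹ * x * x) := hc1.mul hid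
    set G : ℋ →L[ℂ] ℋ := cfc (fun x : ℝ => (|x| + ε)⁻¹) P with hG
    have hGs : star G = G := (cfc_predicate _ P : IsSelfAdjoint _)
    have hGP : G * P * P = cfc (fun x : ℝ => (|x| + ε)⁻¹ * x * x) P := by
      rw [cfc_mul _ _ P hc1.continuousOn hid.continuousOn,
        cfc_mul _ _ P hcg.continuousOn hid.continuousOn, cfc_id' ℝ P]
    have hn1 : ‖P - G * P * P‖ ≤ ε := by
      conv_lhs => rw [hGP]
      nth_rewrite 1 [← cfc_id' ℝ P]
      rw [← cfc_sub _ _ P hid.continuousOn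
        hc2.continuousOn]
      refine norm_cfc_le hε.le fun x hx => ?_
      have hx0 : 0 ≤ x := spectrum_nonneg_of_nonneg hP0 hx
      have hxe : 0 < x + ε := by positivity
      rw [abs_of_nonneg hx0]
      have : x - (x + ε)⁻¹ * x * x = ε * (x / (x + ε)) := by field_simp; ring
      rw [this, Real.norm_of_nonneg (by positivity)]
      have : x / (x + ε) ≤ 1 := (div_le_one hxe).2 (by linarith)
      nlinarith
    have hX : ‖G * star T‖ ≤ 1 := by
      have h1 : ‖G * star T‖ * ‖G * star T‖ = ‖G * P * P * G‖ := by
        rw [← CStarRing.norm_self_mul_star]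
        congr 1
        rw [star_mul, star_star, hGs]
        simp only [mul_assoc]
        rw [← mul_assoc P P, hPP]
        simp only [mul_assoc]
      have h2 : ‖G * P * P * G‖ ≤ 1 := by
        rw [hGP, hG, ← cfc_mul _ _ P hc2.continuousOn
          hcg.continuousOn]
        refine norm_cfc_le zero_le_one fun x hx => ?_
        have hx0 : 0 ≤ x := spectrum_nonneg_of_nonneg hP0 hx
        have hxe : 0 < x + ε := by positivity
        rw [abs_of_nonneg hx0]
        have : (x + ε)⁻¹ * x * x * (x + ε)⁻¹ = (x / (x + ε)) ^ 2 := by field_simp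
        rw [this, Real.norm_of_nonneg (by positivity)]
        have : x / (x + ε) ≤ 1 := (div_le_one hxe).2 (by linarith)
        exact pow_le_one₀ (by positivity) this
      nlinarith [norm_nonneg (G * star T)]
    have hb := h _ hX F
    have e1 : G * star T * T = G * P * P := by rw [mul_assoc, ← hPP, mul_assoc]
    rw [e1] at hb
    have hb2 := (Complex.re_le_norm _).trans hb
    rw [Complex.re_sum] at hb2
    have hb3 : ∑ i ∈ F, (⟪e i, (P - G * P * P) (e i)⟫_ℂ).re ≤ F.card * ε := by
      rw [← nsmul_eq_mul]
      refine Finset.sum_le_card_nsmul _ _ _ fun i _ => ?_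
      refine (Complex.re_le_norm _).trans ((norm_inner_le_norm _ _).trans ?_)
      rw [e.orthonormal.1 i, one_mul]
      refine (ContinuousLinearMap.le_opNorm _ _).trans ?_
      rw [e.orthonormal.1 i, mul_one]
      exact hn1
    have : ∀ i, (⟪e i, P (e i)⟫_ℂ).re =
        (⟪e i, (P - G * P * P) (e i)⟫_ℂ).re + (⟪e i, (G * P * P) (e i)⟫_ℂ).re := by
      intro i
      rw [sub_apply, inner_sub_right, Complex.sub_re]
      ring
    simp_rw [this]
    rw [Finset.sum_add_distrib]
    linarith
  have ht : Filter.Tendsto (fun ε : ℝ => C + F.card * ε) (nhdsWithin 0 (Set.Ioi 0)) (nhds C) := by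
    have : Continuous (fun ε : ℝ => C + F.card * ε) := by fun_prop
    have h2 := (this.tendsto 0).mono_left (nhdsWithin_le_nhds (s := Set.Ioi 0))
    simpa using h2
  exact ge_of_tendsto ht (by filter_upwards [self_mem_nhdsWithin] with ε hε using main ε hε)

lemma aux_prop_deriv {H : ℝ → (ℋ →L[ℂ] ℋ)} {U : ℝ → ℝ → (ℋ →L[ℂ] ℋ)} (hH : Continuous H)
    (hU : IsPropagator H U) (s t : ℝ) :
    HasDerivAt (fun t => U t s) (-(Complex.I • (H t * U t s))) t := by
  have hc : Continuous fun τ => H τ * U τ s := hH.mul (hU.1 s)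
  have h1 := (hc.integral_hasStrictDerivAt s t).hasDerivAt
  have h2 := (h1.const_smul Complex.I).const_sub (1 : ℋ →L[ℂ] ℋ)
  have : (fun t => U t s) = fun t => 1 - Complex.I • ∫ τ in s..t, (H τ) * (U τ s) := by
    ext1 t; exact hU.2 s t
  rw [this]
  exact h2

lemma aux_prop_self {H : ℝ → (ℋ →L[ℂ] ℋ)} {U : ℝ → ℝ → (ℋ →L[ℂ] ℋ)}
    (hU : IsPropagator H U) (s : ℝ) : U s s = 1 := by
  rw [hU.2 s s]; simp

lemma aux_prop_star_mul {H₁ H₂ : ℝ → (ℋ →L[ℂ] ℋ)} {U₁ U₂ : ℝ → ℝ → (ℋ →L[ℂ] ℋ)}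
    (hH₁ : Continuous H₁) (hH₂ : Continuous H₂) (hs : ∀ t, star (H₁ t) = H₁ t)
    (hU₁ : IsPropagator H₁ U₁) (hU₂ : IsPropagator H₂ U₂) (s t : ℝ) :
    HasDerivAt (fun t => star (U₁ t s) * U₂ t s)
      (Complex.I • (star (U₁ t s) * (H₁ t - H₂ t) * U₂ t s)) t := by
  have h := (aux_prop_deriv hH₁ hU₁ s t).star.mul (aux_prop_deriv hH₂ hU₂ s t)
  have key : Complex.I • (star (U₁ t s) * (H₁ t - H₂ t) * U₂ t s) =
      star (-(Complex.I • (H₁ t * U₁ t s))) * U₂ t s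
        + star (U₁ t s) * -(Complex.I • (H₂ t * U₂ t s)) := by
    simp only [star_neg, star_smul, star_mul, hs, mul_sub, sub_mul, smul_sub, mul_neg, neg_mul,
      mul_smul_comm, smul_mul_assoc, mul_assoc]
    simp [sub_eq_add_neg]
  rw [key]
  exact h

lemma aux_prop_isom {H : ℝ → (ℋ →L[ℂ] ℋ)} {U : ℝ → ℝ → (ℋ →L[ℂ] ℋ)}
    (hH : Continuous H) (hs : ∀ t, star (H t) = H t)
    (hU : IsPropagator H U) (s t : ℝ) : star (U t s) * U t s = 1 := by
  have h := fun t => aux_prop_star_mul hH hH hs hU hU s t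
  have h2 := is_const_of_deriv_eq_zero (fun t => (h t).differentiableAt)
    (fun t => by rw [(h t).deriv]; simp) t s
  simpa [aux_prop_self hU] using h2

lemma aux_norm_le_one {A : ℋ →L[ℂ] ℋ} (h : star A * A = 1) : ‖A‖ ≤ 1 := by
  have h1 : ‖A‖ * ‖A‖ = ‖(1 : ℋ →L[ℂ] ℋ)‖ := by rw [← CStarRing.norm_star_mul_self, h]
  have h2 : ‖(1 : ℋ →L[ℂ] ℋ)‖ ≤ 1 := ContinuousLinearMap.norm_id_le
  nlinarith [norm_nonneg A]

lemma aux_isom_sub {A B : ℋ →L[ℂ] ℋ} (hA : star A * A = 1) (hB : star B * B = 1) :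
    ‖A - B‖ ^ 2 ≤ 2 * ‖star A * B - 1‖ := by
  rw [sq, ← CStarRing.norm_star_mul_self]
  have : star (A - B) * (A - B) = -(star A * B - 1) - star (star A * B - 1) := by
    simp only [star_sub, star_mul, star_star, star_one, sub_mul, mul_sub, hA, hB]
    abel
  rw [this]
  refine (norm_sub_le _ _).trans ?_
  rw [norm_neg, norm_star]
  linarith

lemma aux_prop_close {H₁ H₂ : ℝ → (ℋ →L[ℂ] ℋ)} {U₁ U₂ : ℝ → ℝ → (ℋ →L[ℂ] ℋ)}
    (hH₁ : Continuous H₁) (hH₂ : Continuous H₂) (hs₁ : ∀ t, star (H₁ t) = H₁ t)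
    (hs₂ : ∀ t, star (H₂ t) = H₂ t)
    (hU₁ : IsPropagator H₁ U₁) (hU₂ : IsPropagator H₂ U₂) (s t : ℝ) (C : ℝ)
    (hC : ∀ τ ∈ Set.uIcc s t, ‖H₁ τ - H₂ τ‖ ≤ C) :
    ‖U₁ t s - U₂ t s‖ ^ 2 ≤ 2 * (C * |t - s|) := by
  refine (aux_isom_sub (aux_prop_isom hH₁ hs₁ hU₁ s t) (aux_prop_isom hH₂ hs₂ hU₂ s t)).trans ?_
  have h := (convex_uIcc s t).norm_image_sub_le_of_norm_hasDerivWithin_le (C := C)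
    (fun x _ => (aux_prop_star_mul hH₁ hH₂ hs₁ hU₁ hU₂ s x).hasDerivWithinAt) (fun x hx => by
      rw [norm_smul, Complex.norm_I, one_mul]
      refine (norm_mul_le _ _).trans ?_
      have h1 := aux_norm_le_one (aux_prop_isom hH₁ hs₁ hU₁ s x)
      have h2 := aux_norm_le_one (aux_prop_isom hH₂ hs₂ hU₂ s x)
      have h3 : ‖star (U₁ x s) * (H₁ x - H₂ x)‖ ≤ C := by
        refine (norm_mul_le _ _).trans ?_
        rw [norm_star]
        have := hC x hx
        nlinarith [norm_nonneg (H₁ x - H₂ x)]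
      nlinarith [norm_nonneg (star (U₁ x s) * (H₁ x - H₂ x))])
    Set.left_mem_uIcc Set.right_mem_uIcc
  simp only [aux_prop_self hU₁, aux_prop_self hU₂, star_one, mul_one] at h
  rw [Real.norm_eq_abs] at h
  linarith

lemma aux_sTau_cont (𝔖 𝔰 : ℋ →L[ℂ] ℋ) : Continuous (sTau 𝔖 𝔰) := by
  let _ : NormedAlgebra ℚ (ℋ →L[ℂ] ℋ) := NormedAlgebra.restrictScalars ℚ ℂ _
  have := NormedSpace.exp_continuous (𝔸 := ℋ →L[ℂ] ℋ)
  unfold sTau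
  fun_prop

lemma aux_sTau_star (𝔖 𝔰 : ℋ →L[ℂ] ℋ) (h𝔖 : IsSelfAdjoint 𝔖) (h𝔰 : IsSelfAdjoint 𝔰) (τ : ℝ) :
    star (sTau 𝔖 𝔰 τ) = sTau 𝔖 𝔰 τ := by
  unfold sTau
  simp [star_mul, NormedSpace.star_exp, h𝔖.star_eq, h𝔰.star_eq, mul_assoc, mul_comm Complex.I]

lemma aux_gamma_deriv {H : ℝ → (ℋ →L[ℂ] ℋ)} {U : ℝ → ℝ → (ℋ →L[ℂ] ℋ)} (hH : Continuous H)
    (hs : ∀ t, star (H t) = H t) (hU : IsPropagator H U) (A : ℋ →L[ℂ] ℋ) (t : ℝ) :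
    HasDerivAt (fun t => U t 0 * A * star (U t 0))
      (Complex.I • ((U t 0 * A * star (U t 0)) * H t - H t * (U t 0 * A * star (U t 0)))) t := by
  have h := ((aux_prop_deriv hH hU 0 t).mul_const A).mul (aux_prop_deriv hH hU 0 t).star
  have key : Complex.I • ((U t 0 * A * star (U t 0)) * H t - H t * (U t 0 * A * star (U t 0))) =
      -(Complex.I • (H t * U t 0)) * A * star (U t 0)
        + U t 0 * A * star (-(Complex.I • (H t * U t 0))) := by
    simp only [star_neg, star_smul, star_mul, hs, smul_sub, mul_neg, neg_mul,
      mul_smul_comm, smul_mul_assoc, mul_assoc]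
    simp [sub_eq_add_neg, add_comm]
  rw [key]
  exact h

lemma aux_norm_state_le {ι : Type*} (e : HilbertBasis ι ℂ ℋ) (γ : ℋ →L[ℂ] ℋ)
    (hγ : γ.IsPositive) (h1 : HasSum (fun i => (⟪e i, γ (e i)⟫_ℂ).re) 1) : ‖γ‖ ≤ 1 := by
  obtain ⟨i⟩ : Nonempty ι := by
    by_contra hn
    rw [not_nonempty_iff] at hn
    have := h1.unique hasSum_empty
    norm_num at this
  refine ContinuousLinearMap.opNorm_le_bound _ zero_le_one fun x => ?_
  have hi := e.orthonormal.1 i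
  have h := aux_trace_bound e γ (InnerProductSpace.rankOne ℂ (e i) (γ x))
    (InnerProductSpace.rankOne ℂ x (e i)) hγ h1 {i}
  rw [Finset.sum_singleton] at h
  simp only [mul_apply_eq_comp, InnerProductSpace.rankOne_apply, inner_smul_right,
    inner_self_eq_norm_sq_to_K, hi, map_smul, InnerProductSpace.norm_rankOne] at h
  simp only [norm_mul, norm_pow, one_pow, mul_one, one_mul, Complex.coe_algebraMap,
    Complex.norm_real, norm_norm, RCLike.ofReal_one, norm_one, hi] at h
  by_cases h0 : ‖γ x‖ = 0
  · rw [h0]; positivity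
  · have : 0 < ‖γ x‖ := lt_of_le_of_ne (norm_nonneg _) (Ne.symm h0)
    nlinarith

lemma aux_traceNorm_nonneg {ι : Type*} (e : HilbertBasis ι ℂ ℋ) (T : ℋ →L[ℂ] ℋ) :
    0 ≤ traceNorm e T := tsum_nonneg fun _ => aux_sqrt_re_nonneg _ _

lemma aux_norm_mul_le {A B : ℋ →L[ℂ] ℋ} {a b : ℝ} (hA : ‖A‖ ≤ a) (hB : ‖B‖ ≤ b) :
    ‖A * B‖ ≤ a * b :=
  (norm_mul_le _ _).trans (mul_le_mul hA hB (norm_nonneg _) ((norm_nonneg _).trans hA))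

lemma aux_tn1 {ι : Type*} (e : HilbertBasis ι ℂ ℋ) (γ U : ℋ →L[ℂ] ℋ) (θ : ℂ)
    (hγ : γ.IsPositive) (h1 : HasSum (fun i => (⟪e i, γ (e i)⟫_ℂ).re) 1)
    (hU : ‖U‖ ≤ 1) (hθ : ‖θ‖ = 1) : traceNorm e (θ • (U * γ * star U)) ≤ 1 := by
  refine aux_traceNorm_le e _ _ fun X hX F => ?_
  have : X * (θ • (U * γ * star U)) = (θ • (X * U)) * γ * star U := by
    simp only [mul_smul_comm, smul_mul_assoc, mul_assoc]
  rw [this]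
  refine (aux_trace_bound e γ _ _ hγ h1 F).trans ?_
  rw [norm_smul, hθ, norm_star]
  have := aux_norm_mul_le hX hU
  nlinarith [norm_nonneg U, norm_nonneg (X * U)]

lemma aux_tn2 {ι : Type*} (e : HilbertBasis ι ℂ ℋ) (γ U S : ℋ →L[ℂ] ℋ) (θ : ℂ) (r : ℝ)
    (hγ : γ.IsPositive) (h1 : HasSum (fun i => (⟪e i, γ (e i)⟫_ℂ).re) 1)
    (hU : ‖U‖ ≤ 1) (hθ : ‖θ‖ = 1) :
    traceNorm e (r • θ • (U * γ * star U * S - S * (U * γ * star U))) ≤ 2 * (|r| * ‖S‖) := by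
  refine aux_traceNorm_le e _ _ fun X hX F => ?_
  have : X * (r • θ • (U * γ * star U * S - S * (U * γ * star U))) =
      (r • θ • (X * U)) * γ * (star U * S) - (r • θ • (X * S * U)) * γ * star U := by
    simp only [mul_smul_comm, smul_mul_assoc, mul_assoc, mul_sub, smul_sub]
  rw [this]
  simp only [sub_apply, inner_sub_right, Finset.sum_sub_distrib]
  refine (norm_sub_le _ _).trans ?_
  have b1 := aux_trace_bound e γ (r • θ • (X * U)) (star U * S) hγ h1 F
  have b2 := aux_trace_bound e γ (r • θ • (X * S * U)) (star U) hγ h1 F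
  rw [norm_smul, norm_smul, hθ, one_mul, Real.norm_eq_abs] at b1 b2
  have hU' : ‖star U‖ ≤ 1 := by rwa [norm_star]
  have c1 : |r| * ‖X * U‖ * ‖star U * S‖ ≤ |r| * (1 * 1) * (1 * ‖S‖) := by
    gcongr
    · exact aux_norm_mul_le hX hU
    · exact aux_norm_mul_le hU' le_rfl
  have c2 : |r| * ‖X * S * U‖ * ‖star U‖ ≤ |r| * (1 * ‖S‖ * 1) * 1 := by
    gcongr
    exact aux_norm_mul_le (aux_norm_mul_le hX le_rfl) hU
  linarith

/-- The explicitly evolved state-valued measure solves the quasi-classical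
transport equation of the spin-boson model: all integrands are Bochner integrable (also in
trace norm) and
`𝔫̂_t(η) − 𝔫̂_s(η) = i ∫_s^t ∫ [γ_τ(z), 𝔰(τ)] α_τ(z) e^{2i Re⟨η,z⟩} dμ(z) dτ`. -/
theorem evolved_svm_solves_transport_equation
    {𝔥 : Type*} [NormedAddCommGroup 𝔥] [InnerProductSpace ℂ 𝔥] [CompleteSpace 𝔥]
    [MeasurableSpace 𝔥] [BorelSpace 𝔥] [SecondCountableTopology 𝔥]
    [SecondCountableTopology ℋ]
    {ι : Type*} (e : HilbertBasis ι ℂ ℋ)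
    (𝔖 𝔰 : ℋ →L[ℂ] ℋ) (h𝔖 : IsSelfAdjoint 𝔖) (h𝔰 : IsSelfAdjoint 𝔰) (g : 𝔥)
    (V : ℝ → (𝔥 →L[ℂ] 𝔥))
    (hVunit : ∀ τ : ℝ, V τ ∈ unitary (𝔥 →L[ℂ] 𝔥))
    (hV0 : V 0 = 1) (hVgrp : ∀ σ τ : ℝ, V (σ + τ) = V σ * V τ)
    (hVcont : ∀ x : 𝔥, Continuous fun τ => V τ x)
    (U : 𝔥 → ℝ → ℝ → (ℋ →L[ℂ] ℋ))
    (hU : ∀ z : 𝔥,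
      IsPropagator (fun τ => (2 * (⟪z, V τ g⟫_ℂ).re) • sTau 𝔖 𝔰 τ) (U z))
    (μ : Measure 𝔥) (γ : 𝔥 → (ℋ →L[ℂ] ℋ))
    (hsvm : IsStateValuedMeasure e μ γ)
    (hmom : Integrable (fun z : 𝔥 => ‖z‖) μ) :
    ∀ (t s : ℝ) (η : 𝔥),
      (Integrable (fun z : 𝔥 =>
        Complex.exp (2 * Complex.I * ((⟪η, z⟫_ℂ).re : ℂ)) • gammaT U γ t z) μ) ∧
      (Integrable (fun z : 𝔥 =>
        traceNorm e
          (Complex.exp (2 * Complex.I * ((⟪η, z⟫_ℂ).re : ℂ)) • gammaT U γ t z)) μ) ∧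
      (Integrable (fun p : ℝ × 𝔥 =>
          (2 * (⟪p.2, V p.1 g⟫_ℂ).re) •
            Complex.exp (2 * Complex.I * ((⟪η, p.2⟫_ℂ).re : ℂ)) •
              (gammaT U γ p.1 p.2 * sTau 𝔖 𝔰 p.1 - sTau 𝔖 𝔰 p.1 * gammaT U γ p.1 p.2))
        ((volume.restrict (Set.uIcc s t)).prod μ)) ∧
      (Integrable (fun p : ℝ × 𝔥 =>
          traceNorm e
            ((2 * (⟪p.2, V p.1 g⟫_ℂ).re) •
              Complex.exp (2 * Complex.I * ((⟪η, p.2⟫_ℂ).re : ℂ)) •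
                (gammaT U γ p.1 p.2 * sTau 𝔖 𝔰 p.1 - sTau 𝔖 𝔰 p.1 * gammaT U γ p.1 p.2)))
        ((volume.restrict (Set.uIcc s t)).prod μ)) ∧
      (∫ z : 𝔥, Complex.exp (2 * Complex.I * ((⟪η, z⟫_ℂ).re : ℂ)) • gammaT U γ t z ∂μ) -
          (∫ z : 𝔥, Complex.exp (2 * Complex.I * ((⟪η, z⟫_ℂ).re : ℂ)) • gammaT U γ s z ∂μ) =
        Complex.I • ∫ τ in s..t,
          (∫ z : 𝔥,
            (2 * (⟪z, V τ g⟫_ℂ).re) •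
              Complex.exp (2 * Complex.I * ((⟪η, z⟫_ℂ).re : ℂ)) •
                (gammaT U γ τ z * sTau 𝔖 𝔰 τ - sTau 𝔖 𝔰 τ * gammaT U γ τ z) ∂μ) := by
  obtain ⟨hfin, hγint, -, hγpos, hγtr⟩ := hsvm
  have hHc : ∀ z, Continuous fun τ => (2 * (⟪z, V τ g⟫_ℂ).re) • sTau 𝔖 𝔰 τ := fun z => by
    have h1 := hVcont g
    have h2 := aux_sTau_cont 𝔖 𝔰
    fun_prop
  have hHs : ∀ z τ, star ((2 * (⟪z, V τ g⟫_ℂ).re) • sTau 𝔖 𝔰 τ) =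
      (2 * (⟪z, V τ g⟫_ℂ).re) • sTau 𝔖 𝔰 τ := fun z τ => by
    rw [star_smul, aux_sTau_star 𝔖 𝔰 h𝔖 h𝔰, star_trivial]
  have hUn : ∀ z t, ‖U z t 0‖ ≤ 1 := fun z t =>
    aux_norm_le_one (aux_prop_isom (hHc z) (hHs z) (hU z) 0 t)
  have hα : ∀ z τ, |2 * (⟪z, V τ g⟫_ℂ).re| ≤ 2 * (‖z‖ * ‖g‖) := fun z τ => by
    rw [abs_mul, abs_two]
    gcongr
    refine (Complex.abs_re_le_norm _).trans ((norm_inner_le_norm _ _).trans ?_)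
    gcongr
    have h1 : ‖V τ‖ ≤ 1 := aux_norm_le_one (hVunit τ).1
    refine ((V τ).le_opNorm g).trans ?_
    nlinarith [norm_nonneg g]
  have hsC : ∀ a b : ℝ, ∃ C : ℝ, 0 ≤ C ∧ ∀ τ ∈ Set.uIcc a b, ‖sTau 𝔖 𝔰 τ‖ ≤ C := fun a b => by
    obtain ⟨C, hC⟩ := isCompact_uIcc.exists_bound_of_continuousOn
      (aux_sTau_cont 𝔖 𝔰).continuousOn (s := Set.uIcc a b)
    exact ⟨C, (norm_nonneg _).trans (hC a Set.left_mem_uIcc), hC⟩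
  have hUz : ∀ t, Continuous fun z => U z t 0 := fun t => by
    obtain ⟨C, hC0, hC⟩ := hsC 0 t
    rw [continuous_iff_continuousAt]
    intro w
    rw [ContinuousAt, tendsto_iff_norm_sub_tendsto_zero]
    have hb : ∀ z, ‖U z t 0 - U w t 0‖ ≤
        √(2 * (2 * (‖z - w‖ * ‖g‖) * C * |t - 0|)) := fun z => by
      refine Real.le_sqrt_of_sq_le ?_
      refine aux_prop_close (hHc z) (hHc w) (hHs z) (hHs w) (hU z) (hU w) 0 t _ fun τ hτ => ?_
      have : (2 * (⟪z, V τ g⟫_ℂ).re) • sTau 𝔖 𝔰 τ - (2 * (⟪w, V τ g⟫_ℂ).re) • sTau 𝔖 𝔰 τ =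
          (2 * (⟪z - w, V τ g⟫_ℂ).re) • sTau 𝔖 𝔰 τ := by
        rw [← sub_smul, inner_sub_left, Complex.sub_re, mul_sub]
      rw [this, norm_smul, Real.norm_eq_abs]
      exact mul_le_mul (hα _ _) (hC τ hτ) (norm_nonneg _) (by positivity)
    refine squeeze_zero (fun _ => norm_nonneg _) hb ?_
    have hc : Continuous fun z : 𝔥 => √(2 * (2 * (‖z - w‖ * ‖g‖) * C * |t - 0|)) := by fun_prop
    have h2 := hc.tendsto w
    simpa using h2
  have hUm : StronglyMeasurable fun p : ℝ × 𝔥 => U p.2 p.1 0 :=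
    stronglyMeasurable_uncurry_of_continuous_of_stronglyMeasurable
      (u := fun t z => U z t 0) (fun z => (hU z).1 0) (fun t => (hUz t).stronglyMeasurable)
  intro t s η
  set θ : 𝔥 → ℂ := fun z => Complex.exp (2 * Complex.I * ((⟪η, z⟫_ℂ).re : ℂ)) with hθ
  have hθc : Continuous θ := by
    rw [hθ]
    fun_prop
  have hθn : ∀ z, ‖θ z‖ = 1 := fun z => by
    rw [hθ]
    have : 2 * Complex.I * ((⟪η, z⟫_ℂ).re : ℂ) = ((2 * (⟪η, z⟫_ℂ).re : ℝ) : ℂ) * Complex.I := by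
      push_cast; ring
    simp only [this, Complex.norm_exp_ofReal_mul_I]
  have hGn : ∀ t z, ‖gammaT U γ t z‖ ≤ ‖γ z‖ := fun t z => by
    have hs : ‖star (U z t 0)‖ ≤ 1 := by rw [norm_star]; exact hUn z t
    have := aux_norm_mul_le (aux_norm_mul_le (hUn z t) (le_refl ‖γ z‖)) hs
    rw [one_mul, mul_one] at this
    exact this
  have hGm : ∀ t, AEStronglyMeasurable (gammaT U γ t) μ := fun t =>
    (((hUz t).aestronglyMeasurable).mul hγint.aestronglyMeasurable).mul
      (hUz t).star.aestronglyMeasurable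
  have hI1 : ∀ t, Integrable (fun z : 𝔥 => θ z • gammaT U γ t z) μ := fun t => by
    refine hγint.mono (hθc.aestronglyMeasurable.smul (hGm t)) (Filter.Eventually.of_forall ?_)
    intro z
    rw [norm_smul, hθn, one_mul]
    exact hGn t z
  set ν := (volume.restrict (Set.uIcc s t)).prod μ with hν
  have hGm2 : AEStronglyMeasurable (fun p : ℝ × 𝔥 => gammaT U γ p.1 p.2) ν := by
    have h1 : AEStronglyMeasurable (fun p : ℝ × 𝔥 => γ p.2) ν :=
      hγint.aestronglyMeasurable.comp_quasiMeasurePreserving Measure.quasiMeasurePreserving_snd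
    exact (hUm.aestronglyMeasurable.mul h1).mul
      (continuous_star.comp_stronglyMeasurable hUm).aestronglyMeasurable
  have hαm : StronglyMeasurable (fun p : ℝ × 𝔥 => 2 * (⟪p.2, V p.1 g⟫_ℂ).re) := by
    have h1 := hVcont g
    refine Continuous.stronglyMeasurable ?_
    fun_prop
  have hTm : AEStronglyMeasurable (fun p : ℝ × 𝔥 => (2 * (⟪p.2, V p.1 g⟫_ℂ).re) • θ p.2 •
      (gammaT U γ p.1 p.2 * sTau 𝔖 𝔰 p.1 - sTau 𝔖 𝔰 p.1 * gammaT U γ p.1 p.2)) ν := by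
    have h1 : StronglyMeasurable fun p : ℝ × 𝔥 => sTau 𝔖 𝔰 p.1 :=
      (aux_sTau_cont 𝔖 𝔰).stronglyMeasurable.comp_measurable measurable_fst
    have h2 : StronglyMeasurable fun p : ℝ × 𝔥 => θ p.2 :=
      hθc.stronglyMeasurable.comp_measurable measurable_snd
    exact hαm.aestronglyMeasurable.smul (h2.aestronglyMeasurable.smul
      ((hGm2.mul h1.aestronglyMeasurable).sub (h1.aestronglyMeasurable.mul hGm2)))
  obtain ⟨C, hC0, hC⟩ := hsC s t
  have hp1 : ∀ᵐ p ∂ν, p.1 ∈ Set.uIcc s t :=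
    Measure.quasiMeasurePreserving_fst.ae (ae_restrict_mem measurableSet_uIcc)
  have hp2 : ∀ᵐ p ∂ν, (γ p.2).IsPositive := Measure.quasiMeasurePreserving_snd.ae hγpos
  have hp3 : ∀ᵐ p ∂ν, HasSum (fun i => (⟪e i, γ p.2 (e i)⟫_ℂ).re) 1 :=
    Measure.quasiMeasurePreserving_snd.ae hγtr
  have hfin2 : IsFiniteMeasure (volume.restrict (Set.uIcc s t)) :=
    isFiniteMeasure_restrict.2 isCompact_uIcc.measure_lt_top.ne
  have hbi : Integrable (fun p : ℝ × 𝔥 => 2 * (2 * (‖p.2‖ * ‖g‖) * C)) ν :=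
    ((((hmom.comp_snd (volume.restrict (Set.uIcc s t))).mul_const ‖g‖).const_mul 2).mul_const
      C).const_mul 2
  have hI3 : Integrable (fun p : ℝ × 𝔥 => (2 * (⟪p.2, V p.1 g⟫_ℂ).re) • θ p.2 •
      (gammaT U γ p.1 p.2 * sTau 𝔖 𝔰 p.1 - sTau 𝔖 𝔰 p.1 * gammaT U γ p.1 p.2)) ν := by
    refine hbi.mono' hTm ?_
    filter_upwards [hp1, hp2, hp3] with p h1 h2 h3
    have hg : ‖gammaT U γ p.1 p.2‖ ≤ 1 := (hGn _ _).trans (aux_norm_state_le e _ h2 h3)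
    have hc := hC p.1 h1
    have n1 := aux_norm_mul_le hg hc
    have n2 := aux_norm_mul_le hc hg
    have n3 := norm_sub_le (gammaT U γ p.1 p.2 * sTau 𝔖 𝔰 p.1) (sTau 𝔖 𝔰 p.1 * gammaT U γ p.1 p.2)
    rw [norm_smul, norm_smul, hθn, one_mul, Real.norm_eq_abs]
    calc _ ≤ 2 * (‖p.2‖ * ‖g‖) * (2 * C) :=
          mul_le_mul (hα _ _) (by linarith) (norm_nonneg _) (by positivity)
      _ = _ := by ring
  refine ⟨hI1 t, ?_, hI3, ?_, ?_⟩
  · refine Integrable.mono' (integrable_const (1 : ℝ))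
      (aux_traceNorm_meas e (hI1 t).aestronglyMeasurable) ?_
    filter_upwards [hγpos, hγtr] with z h2 h3
    rw [Real.norm_of_nonneg (aux_traceNorm_nonneg _ _)]
    exact aux_tn1 e _ _ _ h2 h3 (hUn z t) (hθn z)
  · refine hbi.mono' (aux_traceNorm_meas e hTm) ?_
    filter_upwards [hp1, hp2, hp3] with p h1 h2 h3
    rw [Real.norm_of_nonneg (aux_traceNorm_nonneg _ _)]
    refine (aux_tn2 e _ _ _ _ _ h2 h3 (hUn p.2 p.1) (hθn p.2)).trans ?_
    gcongr
    · exact hα _ _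
    · exact hC _ h1
  · have hsub : Set.uIoc s t ⊆ Set.uIcc s t := Set.uIoc_subset_uIcc
    rw [intervalIntegral_integral_swap (f := fun τ z => (2 * (⟪z, V τ g⟫_ℂ).re) • θ z •
      (gammaT U γ τ z * sTau 𝔖 𝔰 τ - sTau 𝔖 𝔰 τ * gammaT U γ τ z))
      (hI3.mono_measure (Measure.prod_mono (Measure.restrict_mono hsub le_rfl) le_rfl)),
      ← integral_sub (hI1 t) (hI1 s), ← integral_smul]
    refine integral_congr_ae (Filter.Eventually.of_forall fun z => ?_)
    have hd : ∀ τ, HasDerivAt (fun τ => θ z • gammaT U γ τ z)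
        (Complex.I • ((2 * (⟪z, V τ g⟫_ℂ).re) • θ z •
          (gammaT U γ τ z * sTau 𝔖 𝔰 τ - sTau 𝔖 𝔰 τ * gammaT U γ τ z))) τ := fun τ => by
      have h := (aux_gamma_deriv (hHc z) (hHs z) (hU z) (γ z) τ).const_smul (θ z)
      have key : Complex.I • ((2 * (⟪z, V τ g⟫_ℂ).re) • θ z •
          (gammaT U γ τ z * sTau 𝔖 𝔰 τ - sTau 𝔖 𝔰 τ * gammaT U γ τ z)) =
          θ z • Complex.I • (gammaT U γ τ z * ((2 * (⟪z, V τ g⟫_ℂ).re) • sTau 𝔖 𝔰 τ) -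
            ((2 * (⟪z, V τ g⟫_ℂ).re) • sTau 𝔖 𝔰 τ) * gammaT U γ τ z) := by
        rw [mul_smul_comm, smul_mul_assoc, ← smul_sub, smul_comm (θ z) Complex.I,
          smul_comm (θ z) (2 * (⟪z, V τ g⟫_ℂ).re)]
      rw [key]
      exact h
    have hcont : Continuous fun τ => Complex.I • ((2 * (⟪z, V τ g⟫_ℂ).re) • θ z •
          (gammaT U γ τ z * sTau 𝔖 𝔰 τ - sTau 𝔖 𝔰 τ * gammaT U γ τ z)) := by
      have h1 := hVcont g
      have h2 := aux_sTau_cont 𝔖 𝔰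
      have h3 : Continuous fun τ => gammaT U γ τ z :=
        (((hU z).1 0).mul continuous_const).mul ((hU z).1 0).star
      fun_prop
    have hftc := intervalIntegral.integral_eq_sub_of_hasDerivAt (a := s) (b := t)
      (fun τ _ => hd τ) (hcont.intervalIntegrable s t)
    rw [intervalIntegral.integral_smul] at hftc
    exact hftc.symm
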